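/- arXiv:2207.03235 — 2 statements merged into one kernel-verified Lean document; each statement's English description precedes it below -/
import Mathlib

section
/- Let A ∈ ℝ^{n×n}, B ∈ ℝ^{n×m} with the pair {A,B} controllable (i.e., the block matrix [B, AB, …, A^{n−1}B] has rank n), and let ñ be the minimal natural number such that [B, AB, …, A^{ñ−1}B] has rank n. Suppose Y₀ ∈ ℝ^{m×n} and G₀ ∈ ℝ^{n×n} satisfy A G₀ − G₀ A + B Y₀ = A and G₀ B = 0. Then: (i) the matrix G₀ − I_n is invertible; (ii) for every μ ∈ [−1, 1/ñ] the matrix G_d = I_n + μ G₀ is anti-Hurwitz, i.e., every eigenvalue of G_d (regarded as a complex matrix) has strictly positive real part; (iii) the matrix A₀ = A + B Y₀ (G₀ − I_n)^{−1} satisfies A₀ G_d = (G_d + μ I_n) A₀ and G_d B = B for every μ ∈ [−1, 1/ñ]. -/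
open Matrix

/-- The controllability matrix [B, AB, …, A^{k−1}B] (with columns indexed by `Fin k × Fin m`). -/
def ctrbM {n m : ℕ} (A : Matrix (Fin n) (Fin n) ℝ) (B : Matrix (Fin n) (Fin m) ℝ) (k : ℕ) :
    Matrix (Fin n) (Fin k × Fin m) ℝ :=
  Matrix.of fun i p => (A ^ (p.1 : ℕ) * B) i p.2

/-- A real matrix is anti-Hurwitz if every eigenvalue of its complexification has
strictly positive real part. -/
def AntiHurwitz {n : ℕ} (M : Matrix (Fin n) (Fin n) ℝ) : Prop :=
  ∀ z ∈ spectrum ℂ (M.map (Complex.ofReal)), 0 < z.re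

/-!
The identity `A * G - G * A + C = A` with `G * C = 0` says that `G * A` intertwines `G` and
`G + 1`. With `p k = X (X + 1) ⋯ (X + k - 1)` the rising factorial, it follows that
`p (k + 1) (G) * A = G * A * p k (G)`, so `G * B = 0` propagates to `p k (G) * (A ^ j * B) = 0` for
all `j < k`. Once the controllability matrix has full row rank this forces `p k (G) = 0`: the
eigenvalues of `G` lie in `{0, -1, …, -(k - 1)}`, and those of `1 + μ • G` have the form `1 - μ j`
with `j < k`. The matrix `A₀` intertwines `G` and `G + 1` as well, because
`A₀ * (G - 1) = G * A = G * A₀`.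
-/

open Polynomial

section Semiconj

variable {S R : Type*} [CommSemiring S]

lemma semiconjBy_aeval [Semiring R] [Algebra S R] {x y z : R} (h : SemiconjBy x y z) (p : S[X]) :
    SemiconjBy x (aeval y p) (aeval z p) := by
  induction p using Polynomial.induction_on' with
  | add p q hp hq => simpa only [map_add] using hp.add_right hq
  | monomial k s =>
    simpa only [aeval_monomial] using
      SemiconjBy.mul_right (Algebra.commutes s x).symm (h.pow_right k)

lemma mul_eq_mul_sub_one_add [Ring R] {a g c : R} (h : a * g - g * a + c = a) :
    g * a = a * (g - 1) + c := by
  rw [sub_add_eq_add_sub, sub_eq_iff_eq_add'] at h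
  rw [mul_sub_one, sub_add_eq_add_sub, eq_sub_iff_add_eq, h]

lemma semiconjBy_mul_add_one [Ring R] {a g c : R} (h : a * g - g * a + c = a) (hgc : g * c = 0) :
    SemiconjBy (g * a) g (g + 1) := by
  have hcomm : g * (g * a) = g * a * (g - 1) := by
    nth_rewrite 1 [mul_eq_mul_sub_one_add h]
    rw [mul_add, hgc, add_zero, mul_assoc]
  calc g * a * g = g * a * (g - 1) + g * a := by rw [mul_sub_one, sub_add_cancel]
    _ = (g + 1) * (g * a) := by rw [← hcomm, add_one_mul]

lemma semiconjBy_add_mul_left_inv_sub_one [Ring R] {a g c v : R} (h : a * g - g * a + c = a)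
    (hgc : g * c = 0) (hv : v * (g - 1) = 1) : SemiconjBy (a + c * v) g (g + 1) := by
  have hright : (a + c * v) * (g - 1) = g * a := by
    rw [add_mul, mul_assoc, hv, mul_one, ← mul_eq_mul_sub_one_add h]
  have hleft : g * (a + c * v) = g * a := by rw [mul_add, ← mul_assoc, hgc, zero_mul, add_zero]
  calc (a + c * v) * g = (a + c * v) * (g - 1) + (a + c * v) := by
        rw [mul_sub_one, sub_add_cancel]
    _ = (g + 1) * (a + c * v) := by rw [hright, ← hleft, add_one_mul]

lemma aeval_ascPochhammer_succ_mul [Semiring R] [Algebra S R] {a g : R}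
    (h : SemiconjBy (g * a) g (g + 1)) (k : ℕ) :
    aeval g (ascPochhammer S (k + 1)) * a = g * a * aeval g (ascPochhammer S k) := by
  have hcomm : Commute g (aeval (g + 1) (ascPochhammer S k)) :=
    semiconjBy_aeval ((Commute.refl g).add_right (Commute.one_right g)) _
  calc aeval g (ascPochhammer S (k + 1)) * a
      = g * aeval (g + 1) (ascPochhammer S k) * a := by
        simp [ascPochhammer_succ_left, aeval_comp]
    _ = aeval (g + 1) (ascPochhammer S k) * (g * a) := by rw [hcomm.eq, mul_assoc]
    _ = g * a * aeval g (ascPochhammer S k) := (semiconjBy_aeval h _).eq.symm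

end Semiconj

section Spectrum

lemma nontrivial_of_mem_spectrum {S R : Type*} [CommSemiring S] [Ring R] [Algebra S R] {a : R}
    {z : S} (hz : z ∈ spectrum S a) : Nontrivial R := by
  by_contra! hR
  simp [spectrum.of_subsingleton] at hz

variable {S K R : Type*} [Field K] [Ring R] [Algebra K R]

lemma aeval_eq_zero_of_mem_spectrum [CommSemiring S] [Algebra S K] [Algebra S R]
    [IsScalarTower S K R] {a : R} {z : K} (hz : z ∈ spectrum K a) {p : S[X]}
    (hp : aeval a p = 0) : aeval z p = 0 := by
  have := nontrivial_of_mem_spectrum hz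
  have hmem : eval z (p.map (algebraMap S K)) ∈ spectrum K (aeval a (p.map (algebraMap S K))) :=
    spectrum.subset_polynomial_aeval a _ ⟨z, hz, rfl⟩
  rwa [aeval_map_algebraMap, hp, spectrum.zero_eq, Set.mem_singleton_iff,
    eval_map_algebraMap] at hmem

lemma exists_eq_neg_natCast_of_mem_spectrum [CommSemiring S] [Algebra S K] [Algebra S R]
    [IsScalarTower S K R] {a : R} {k : ℕ} (ha : aeval a (ascPochhammer S k) = 0)
    {z : K} (hz : z ∈ spectrum K a) : ∃ j < k, z = -(j : K) := by
  have hroot : (ascPochhammer K k).eval z = 0 := by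
    rw [← ascPochhammer_map (algebraMap S K), eval_map_algebraMap]
    exact aeval_eq_zero_of_mem_spectrum hz ha
  obtain ⟨j, hj, hjz⟩ := (ascPochhammer_eval_eq_zero_iff k z).mp hroot
  exact ⟨j, hj, by rw [hjz, neg_neg]⟩

lemma isUnit_sub_one_of_aeval_ascPochhammer_eq_zero [CharZero K] {a : R} {k : ℕ}
    (ha : aeval a (ascPochhammer K k) = 0) : IsUnit (a - 1) := by
  have hone : (1 : K) ∉ spectrum K a := by
    intro hmem
    obtain ⟨j, -, hj⟩ := exists_eq_neg_natCast_of_mem_spectrum ha hmem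
    have : ((j + 1 : ℕ) : K) = 0 := by
      push_cast
      linear_combination hj
    exact j.succ_ne_zero (Nat.cast_eq_zero.mp this)
  rw [spectrum.notMem_iff, map_one] at hone
  simpa only [neg_sub] using hone.neg

lemma exists_mem_spectrum_of_mem_spectrum_one_add_smul [IsAlgClosed K] [FiniteDimensional K R]
    {a : R} {c z : K} (hz : z ∈ spectrum K (1 + c • a)) :
    ∃ w ∈ spectrum K a, 1 + c * w = z := by
  have := nontrivial_of_mem_spectrum hz
  have hne := spectrum.nonempty_of_isAlgClosed_of_finiteDimensional K a
  have haeval : aeval a (1 + C c * X) = 1 + c • a := by simp [Algebra.smul_def]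
  rw [← haeval, spectrum.map_polynomial_aeval_of_nonempty a _ hne] at hz
  simpa using hz

end Spectrum

section Matrix

lemma eq_zero_of_mul_eq_zero_of_rank_eq_card {K l n p : Type*} [Field K] [Finite l] [Fintype n]
    [Fintype p] {M : Matrix l n K} {N : Matrix n p K} (hN : N.rank = Fintype.card n)
    (hMN : M * N = 0) : M = 0 := by
  have hle : M.rank + N.rank ≤ Fintype.card n := Matrix.rank_add_rank_le_card_of_mul_eq_zero hMN
  have hrange : Module.finrank K M.mulVecLin.range = 0 := show M.rank = 0 by lia
  rw [Submodule.finrank_eq_zero, LinearMap.range_eq_bot] at hrange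
  exact Matrix.mulVec_injective (congrArg DFunLike.coe hrange |>.trans (by ext; simp))

lemma aeval_ascPochhammer_mul_pow_mul_eq_zero {S n m : Type*} [CommSemiring S] [Fintype n]
    [DecidableEq n] {A G : Matrix n n S} {B : Matrix n m S} (h : SemiconjBy (G * A) G (G + 1))
    (hGB : G * B = 0) {j k : ℕ} (hjk : j < k) :
    aeval G (ascPochhammer S k) * (A ^ j * B) = 0 := by
  induction j generalizing k with
  | zero =>
    obtain ⟨k, rfl⟩ := Nat.exists_eq_add_one_of_ne_zero hjk.ne'
    rw [pow_zero, Matrix.one_mul, ascPochhammer_succ_left, mul_comm X, map_mul, aeval_X,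
      Matrix.mul_assoc, hGB, Matrix.mul_zero]
  | succ j ih =>
    obtain ⟨k, rfl⟩ := Nat.exists_eq_add_one_of_ne_zero (Nat.ne_zero_of_lt hjk)
    rw [pow_succ', Matrix.mul_assoc, ← Matrix.mul_assoc, aeval_ascPochhammer_succ_mul h,
      Matrix.mul_assoc, ih (Nat.lt_of_succ_lt_succ hjk), Matrix.mul_zero]

lemma aeval_ascPochhammer_eq_zero_of_rank_ctrbM {n m k : ℕ} {A G : Matrix (Fin n) (Fin n) ℝ}
    {B : Matrix (Fin n) (Fin m) ℝ} (hk : (ctrbM A B k).rank = n)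
    (h : SemiconjBy (G * A) G (G + 1)) (hGB : G * B = 0) :
    aeval G (ascPochhammer ℝ k) = 0 := by
  refine eq_zero_of_mul_eq_zero_of_rank_eq_card (N := ctrbM A B k) (by simpa using hk) ?_
  ext i p
  exact congrFun₂ (aeval_ascPochhammer_mul_pow_mul_eq_zero h hGB p.1.isLt) i p.2

lemma antiHurwitz_one_add_smul {n k : ℕ} {G : Matrix (Fin n) (Fin n) ℝ}
    (hG : aeval G (ascPochhammer ℝ k) = 0) {μ : ℝ} (hμ : ∀ j < k, μ * j < 1) :
    AntiHurwitz (1 + μ • G) := by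
  intro z hz
  let φ : Matrix (Fin n) (Fin n) ℝ →ₐ[ℝ] Matrix (Fin n) (Fin n) ℂ := Complex.ofRealAm.mapMatrix
  have hφ : (1 + μ • G).map Complex.ofReal = 1 + (μ : ℂ) • φ G := by
    change φ (1 + μ • G) = _
    rw [map_add, map_one, map_smul, Complex.coe_smul]
  have hφG : aeval (φ G) (ascPochhammer ℝ k) = 0 := by rw [aeval_algHom_apply, hG, map_zero]
  rw [hφ] at hz
  obtain ⟨w, hw, rfl⟩ := exists_mem_spectrum_of_mem_spectrum_one_add_smul hz
  obtain ⟨j, hj, rfl⟩ := exists_eq_neg_natCast_of_mem_spectrum hφG hw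
  simpa using hμ j hj

end Matrix

lemma mul_natCast_lt_one_of_le_one_div {K : Type*} [Semifield K] [LinearOrder K]
    [IsStrictOrderedRing K] {μ : K} {j k : ℕ} (hμ : μ ≤ 1 / k) (hj : j < k) : μ * j < 1 := by
  have hk : (0 : K) < k := Nat.cast_pos.mpr (Nat.zero_lt_of_lt hj)
  calc μ * j ≤ 1 / k * j := by gcongr
    _ = j / k := by ring
    _ < 1 := (div_lt_one hk).mpr (Nat.cast_lt.mpr hj)

theorem Y0_G0_properties_general {n m k : ℕ}
    (A : Matrix (Fin n) (Fin n) ℝ) (B : Matrix (Fin n) (Fin m) ℝ)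
    (hk : (ctrbM A B k).rank = n)
    (Y₀ : Matrix (Fin m) (Fin n) ℝ) (G₀ : Matrix (Fin n) (Fin n) ℝ)
    (hYG : A * G₀ - G₀ * A + B * Y₀ = A) (hG₀B : G₀ * B = 0) :
    IsUnit (G₀ - 1) ∧
    ∀ μ : ℝ,
      ((∀ j < k, μ * j < 1) → AntiHurwitz (1 + μ • G₀)) ∧
      (A + B * Y₀ * (G₀ - 1)⁻¹) * (1 + μ • G₀) =
        ((1 + μ • G₀) + μ • 1) * (A + B * Y₀ * (G₀ - 1)⁻¹) ∧
      (1 + μ • G₀) * B = B := by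
  have hG₀BY : G₀ * (B * Y₀) = 0 := by rw [← Matrix.mul_assoc, hG₀B, Matrix.zero_mul]
  have hsemi : SemiconjBy (G₀ * A) G₀ (G₀ + 1) := semiconjBy_mul_add_one hYG hG₀BY
  have hann : aeval G₀ (ascPochhammer ℝ k) = 0 :=
    aeval_ascPochhammer_eq_zero_of_rank_ctrbM hk hsemi hG₀B
  have hunit : IsUnit (G₀ - 1) := isUnit_sub_one_of_aeval_ascPochhammer_eq_zero hann
  have hinv : (G₀ - 1)⁻¹ * (G₀ - 1) = 1 :=
    Matrix.nonsing_inv_mul _ ((Matrix.isUnit_iff_isUnit_det _).mp hunit)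
  refine ⟨hunit, fun μ ↦ ⟨antiHurwitz_one_add_smul hann, ?_, ?_⟩⟩
  · rw [add_assoc, ← smul_add]
    exact (SemiconjBy.one_right _).add_right
      ((semiconjBy_add_mul_left_inv_sub_one hYG hG₀BY hinv).smul_right μ)
  · rw [Matrix.add_mul, Matrix.one_mul, Matrix.smul_mul, hG₀B, smul_zero, add_zero]

/-- Properties of any solution (Y₀, G₀) of A G₀ − G₀ A + B Y₀ = A, G₀ B = 0 for a
controllable pair {A,B}. -/
theorem Y0_G0_properties
    {n m : ℕ}
    (A : Matrix (Fin n) (Fin n) ℝ) (B : Matrix (Fin n) (Fin m) ℝ)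
    (hctrb : (ctrbM A B n).rank = n)
    (ntilde : ℕ) (hntilde : (ctrbM A B ntilde).rank = n) (hntildemin : ∀ k < ntilde, (ctrbM A B k).rank ≠ n)
    (Y₀ : Matrix (Fin m) (Fin n) ℝ) (G₀ : Matrix (Fin n) (Fin n) ℝ)
    (hYG : A * G₀ - G₀ * A + B * Y₀ = A) (hG₀B : G₀ * B = 0) :
    IsUnit (G₀ - 1) ∧
    ∀ μ : ℝ, μ ∈ Set.Icc (-1 : ℝ) (1 / (ntilde : ℝ)) →
      AntiHurwitz (1 + μ • G₀) ∧
      (A + B * Y₀ * (G₀ - 1)⁻¹) * (1 + μ • G₀) =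
        ((1 + μ • G₀) + μ • 1) * (A + B * Y₀ * (G₀ - 1)⁻¹) ∧
      (1 + μ • G₀) * B = B := by
  obtain ⟨hunit, h⟩ := Y0_G0_properties_general A B hntilde Y₀ G₀ hYG hG₀B
  exact ⟨hunit, fun μ hμ ↦ ⟨(h μ).1 fun _ ↦ mul_natCast_lt_one_of_le_one_div hμ.2, (h μ).2⟩⟩
end

section
/- Let A₀ ∈ ℝ^{n×n}, B ∈ ℝ^{n×m} with the pair {A₀,B} controllable (rank [B, A₀B, …, A₀^{n−1}B] = n), let μ ∈ ℝ and let G_d ∈ ℝ^{n×n} be anti-Hurwitz (all eigenvalues of its complexification have strictly positive real part) with A₀ G_d = (G_d + μ I_n) A₀ and G_d B = B, where μ ∈ [−1, 1/ñ] and ñ is the minimal natural number such that rank [B, A₀B, …, A₀^{ñ−1}B] = n. Then for every ρ > 0 there exist a symmetric positive definite matrix X ∈ ℝ^{n×n} and a matrix Y ∈ ℝ^{m×n} such that A₀ X + X A₀ᵀ + B Y + Yᵀ Bᵀ + ρ (G_d X + X G_dᵀ) = 0 and G_d X + X G_dᵀ is positive definite. -/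
open Matrix

/-!
Let `E k` be the space of row vectors that annihilate the columns of `B, AB, …, A^{k-1}B`, and put
`L = A^k B`. The relations between `A`, `G` and `B` give `G L = r L` for a scalar `r`, and `r > 0`
if `L ≠ 0` because `G` is anti-Hurwitz. Solutions `(X, Z)` of the problem with input matrix `L`,
restricted to quadratic forms on `E k`, are found by descending induction on `k`, starting from
`E n = 0`. Let `(X, Z)` be a solution on `E (k+1) = {x ∈ E k | x L = 0}` with input matrix `A L`.
For large `c` the matrix `X + L Z + Zᵀ Lᵀ + c L Lᵀ` has the required positivity on all of `E k`, by
Finsler's lemma, while on `E (k+1)` the term `A L Z` moves from the input into the Lyapunov part,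
so that the equation holds there without input. This is exactly the condition for it to be solvable
on `E k` with input matrix `L`. At `k = 0` the space is everything and `L = B`.
-/

section Elimination

variable {𝕜 V W : Type*} [Field 𝕜] [AddCommGroup V] [Module 𝕜 V] [AddCommGroup W] [Module 𝕜 W]

theorem exists_generalized_inverse_on (f : V →ₗ[𝕜] W) (E : Submodule 𝕜 V) :
    ∃ g : W →ₗ[𝕜] V, ∀ x ∈ E, g (f x) ∈ E ∧ f (g (f x)) = f x := by
  obtain ⟨g₀, hg₀⟩ := (f.submoduleMap E).exists_rightInverse_of_surjective
    (LinearMap.range_eq_top.2 (f.submoduleMap_surjective E))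
  obtain ⟨g, hg⟩ := (E.subtype ∘ₗ g₀).exists_extend
  refine ⟨g, fun x hx => ?_⟩
  have hgx : g (f x) = g₀ (f.submoduleMap E ⟨x, hx⟩) :=
    LinearMap.congr_fun hg (f.submoduleMap E ⟨x, hx⟩)
  refine ⟨hgx ▸ Submodule.coe_mem _, hgx ▸ ?_⟩
  exact congrArg Subtype.val (LinearMap.congr_fun hg₀ (f.submoduleMap E ⟨x, hx⟩))

variable {ι κ : Type*} [Fintype ι] [Fintype κ]

theorem exists_forall_dotProduct_add_mul_mulVec_eq_zero (E : Submodule 𝕜 (ι → 𝕜))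
    (M : Matrix ι ι 𝕜) (L : Matrix ι κ 𝕜)
    (hM : ∀ x ∈ E, x ᵥ* L = 0 → x ⬝ᵥ M *ᵥ x = 0) :
    ∃ Z : Matrix κ ι 𝕜, ∀ x ∈ E, x ⬝ᵥ (M + L * Z) *ᵥ x = 0 := by
  classical
  obtain ⟨g, hg⟩ := exists_generalized_inverse_on L.vecMulLinear E
  set S : Matrix ι κ 𝕜 := LinearMap.toMatrix' g
  have hS (w : κ → 𝕜) : S *ᵥ w = g w := LinearMap.toMatrix'_mulVec g w
  refine ⟨-(Sᵀ * (M + Mᵀ - M * S * Lᵀ)), fun x hx => ?_⟩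
  -- `y` is the component of `x` in a complement of the kernel of `L`, so `hM` applies to `x - y`.
  obtain ⟨hyE, hyL⟩ := hg x hx
  simp only [vecMulLinear_apply, ← hS] at hyE hyL
  set y := S *ᵥ (x ᵥ* L)
  have hxy : (x - y) ⬝ᵥ M *ᵥ (x - y) = 0 :=
    hM (x - y) (E.sub_mem hx hyE) (by rw [sub_vecMul, hyL, sub_self])
  have hZ : x ⬝ᵥ (L * (Sᵀ * (M + Mᵀ - M * S * Lᵀ))) *ᵥ x
      = y ⬝ᵥ M *ᵥ x + x ⬝ᵥ M *ᵥ y - y ⬝ᵥ M *ᵥ y := by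
    have hyt : y = x ᵥ* (L * Sᵀ) := by rw [← vecMul_vecMul, vecMul_transpose]
    have hyx : (S * Lᵀ) *ᵥ x = y := by rw [← mulVec_mulVec, mulVec_transpose]
    rw [← Matrix.mul_assoc, ← mulVec_mulVec, dotProduct_mulVec, ← hyt, sub_mulVec, add_mulVec,
      Matrix.mul_assoc, ← mulVec_mulVec, hyx, dotProduct_sub, dotProduct_add,
      dotProduct_transpose_mulVec]
  rw [Matrix.mul_neg, ← sub_eq_add_neg, sub_mulVec, dotProduct_sub, hZ]
  rw [mulVec_sub, dotProduct_sub, sub_dotProduct, sub_dotProduct] at hxy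
  linear_combination hxy

end Elimination

section Finsler

open Filter Topology

theorem eventually_forall_pos_add_mul_of_isCompact {α : Type*} [TopologicalSpace α] {K : Set α}
    (hK : IsCompact K) {f g : α → ℝ} (hf : ContinuousOn f K) (hg : ContinuousOn g K)
    (hg₀ : ∀ x ∈ K, 0 ≤ g x) (hfg : ∀ x ∈ K, g x = 0 → 0 < f x) :
    ∀ᶠ c in atTop, ∀ x ∈ K, 0 < f x + c * g x := by
  refine hK.induction_on (p := fun s => ∀ᶠ c in atTop, ∀ x ∈ s, 0 < f x + c * g x) (by simp)
    (fun s t hst ht => ht.mono fun c hc x hx => hc x (hst hx))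
    (fun s t hs ht => (hs.and ht).mono fun c hc x hx => hx.elim (hc.1 x) (hc.2 x))
    fun x hx => ?_
  obtain ⟨c₀, hc₀⟩ : ∃ c₀, 0 < f x + c₀ * g x := by
    rcases (hg₀ x hx).eq_or_lt with hgx | hgx
    · exact ⟨0, by simpa using hfg x hx hgx.symm⟩
    · refine ⟨(1 - f x) / g x, ?_⟩
      rw [div_mul_cancel₀ _ hgx.ne', add_sub_cancel]
      exact one_pos
  have hcont : ContinuousOn (fun y => f y + c₀ * g y) K := hf.add (continuousOn_const.mul hg)
  refine ⟨_, inter_mem self_mem_nhdsWithin ((hcont x hx).eventually_const_lt hc₀), ?_⟩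
  filter_upwards [eventually_ge_atTop c₀] with c hc y hy
  calc 0 < f y + c₀ * g y := hy.2
    _ ≤ f y + c * g y := by gcongr; exact hg₀ y hy.1

variable {ι κ : Type*} [Fintype ι] [Fintype κ]

/-- **Finsler's lemma** on a subspace. -/
theorem eventually_forall_dotProduct_add_smul_mul_transpose_pos (E : Submodule ℝ (ι → ℝ))
    (M : Matrix ι ι ℝ) (L : Matrix ι κ ℝ)
    (hM : ∀ x ∈ E, x ᵥ* L = 0 → x ≠ 0 → 0 < x ⬝ᵥ M *ᵥ x) :
    ∀ᶠ c : ℝ in atTop, ∀ x ∈ E, x ≠ 0 → 0 < x ⬝ᵥ (M + c • (L * Lᵀ)) *ᵥ x := by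
  have hquad (c : ℝ) (x : ι → ℝ) : x ⬝ᵥ (M + c • (L * Lᵀ)) *ᵥ x
      = x ⬝ᵥ M *ᵥ x + c * ((x ᵥ* L) ⬝ᵥ (x ᵥ* L)) := by
    rw [add_mulVec, dotProduct_add, smul_mulVec, dotProduct_smul, ← mulVec_mulVec,
      dotProduct_mulVec x L, mulVec_transpose, smul_eq_mul]
  have hK : IsCompact (Metric.sphere (0 : ι → ℝ) 1 ∩ E) :=
    (isCompact_sphere 0 1).inter_right E.closed_of_finiteDimensional
  have hsphere := eventually_forall_pos_add_mul_of_isCompact hK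
    (f := fun x => x ⬝ᵥ M *ᵥ x) (g := fun x => (x ᵥ* L) ⬝ᵥ (x ᵥ* L))
    (by fun_prop) (by fun_prop) (fun x _ => dotProduct_self_star_nonneg (x ᵥ* L))
    fun x hx hxL => hM x hx.2 (dotProduct_self_eq_zero.1 hxL)
      (ne_zero_of_mem_unit_sphere ⟨x, hx.1⟩)
  filter_upwards [hsphere] with c hc x hxE hx
  have hunit := hc (‖x‖⁻¹ • x) ⟨by simp [norm_smul, hx], E.smul_mem _ hxE⟩
  rw [← hquad, mulVec_smul, dotProduct_smul, smul_dotProduct, smul_eq_mul, smul_eq_mul] at hunit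
  have hnorm : 0 < ‖x‖⁻¹ := inv_pos.2 (norm_pos_iff.2 hx)
  exact (mul_pos_iff_of_pos_left hnorm).1 ((mul_pos_iff_of_pos_left hnorm).1 hunit)

end Finsler

section Descent

open Filter

variable {ι κ : Type*} [Fintype ι] [Fintype κ]

/-- `IsSolutionOn A G ρ E L X Z` says that `(X, Z)` solves the design problem with input matrix `L`
on the space `E` of row vectors: `X` and `G * X` have positive quadratic forms on `E`, and the
quadratic form of `(A + ρ • G) * X + L * Z`, half the left-hand side of the Lyapunov equation,
vanishes on `E`. -/
structure IsSolutionOn (A G : Matrix ι ι ℝ) (ρ : ℝ) (E : Submodule ℝ (ι → ℝ))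
    (L : Matrix ι κ ℝ) (X : Matrix ι ι ℝ) (Z : Matrix κ ι ℝ) : Prop where
  isSymm : X.IsSymm
  pos : ∀ x ∈ E, x ≠ 0 → 0 < x ⬝ᵥ X *ᵥ x
  pos_mul : ∀ x ∈ E, x ≠ 0 → 0 < x ⬝ᵥ (G * X) *ᵥ x
  lyapunov : ∀ x ∈ E, x ⬝ᵥ ((A + ρ • G) * X + L * Z) *ᵥ x = 0

theorem isSolutionOn_bot (A G : Matrix ι ι ℝ) (ρ : ℝ) (L : Matrix ι κ ℝ) :
    IsSolutionOn A G ρ ⊥ L 0 0 where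
  isSymm := transpose_zero
  pos x hx hx₀ := absurd ((Submodule.mem_bot ℝ).1 hx) hx₀
  pos_mul x hx hx₀ := absurd ((Submodule.mem_bot ℝ).1 hx) hx₀
  lyapunov x _ := by simp

theorem dotProduct_add_mul_add_mul_transpose_mulVec {R : Type*} [CommRing R]
    {L : Matrix ι κ R} {x : ι → R} (hx : x ᵥ* L = 0) (M : Matrix ι ι R) (U : Matrix κ ι R)
    (W : Matrix ι κ R) :
    x ⬝ᵥ (M + (L * U + W * Lᵀ)) *ᵥ x = x ⬝ᵥ M *ᵥ x := by
  rw [add_mulVec, add_mulVec, dotProduct_add, dotProduct_add, ← mulVec_mulVec,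
    dotProduct_mulVec x L, ← mulVec_mulVec, mulVec_transpose, hx, zero_dotProduct, mulVec_zero,
    dotProduct_zero, add_zero, add_zero]

theorem IsSolutionOn.exists_of_inf_ker {A G : Matrix ι ι ℝ} {ρ r : ℝ}
    {E : Submodule ℝ (ι → ℝ)} {L : Matrix ι κ ℝ} {X : Matrix ι ι ℝ} {Z : Matrix κ ι ℝ}
    (h : IsSolutionOn A G ρ (E ⊓ LinearMap.ker L.vecMulLinear) (A * L) X Z)
    (hr : 0 < r) (hGL : G * L = r • L) :
    ∃ X' Z', IsSolutionOn A G ρ E L X' Z' := by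
  have hpos : ∀ x ∈ E, x ᵥ* L = 0 → x ≠ 0 → 0 < x ⬝ᵥ (X + (L * Z + Zᵀ * Lᵀ)) *ᵥ x := by
    intro x hxE hxL hx
    rw [dotProduct_add_mul_add_mul_transpose_mulVec hxL]
    exact h.pos x ⟨hxE, hxL⟩ hx
  have hpos_mul : ∀ x ∈ E, x ᵥ* L = 0 → x ≠ 0 →
      0 < x ⬝ᵥ (G * X + (L * (r • Z) + (G * Zᵀ) * Lᵀ)) *ᵥ x := by
    intro x hxE hxL hx
    rw [dotProduct_add_mul_add_mul_transpose_mulVec hxL]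
    exact h.pos_mul x ⟨hxE, hxL⟩ hx
  have hfinsler := eventually_forall_dotProduct_add_smul_mul_transpose_pos E _ L hpos
  have hfinsler_mul := (tendsto_id.atTop_mul_const hr).eventually
    (eventually_forall_dotProduct_add_smul_mul_transpose_pos E _ L hpos_mul)
  obtain ⟨c, hc, hc_mul⟩ := (hfinsler.and hfinsler_mul).exists
  set X' := X + (L * Z + Zᵀ * Lᵀ) + c • (L * Lᵀ) with hX'
  have hGX' : G * X' = G * X + (L * (r • Z) + (G * Zᵀ) * Lᵀ) + (c * r) • (L * Lᵀ) := by
    simp only [hX', Matrix.mul_add, Matrix.mul_smul, ← Matrix.mul_assoc, hGL, Matrix.smul_mul,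
      smul_smul]
  have hlyap : ∀ x ∈ E, x ᵥ* L = 0 → x ⬝ᵥ ((A + ρ • G) * X') *ᵥ x = 0 := by
    intro x hxE hxL
    have hFX' : (A + ρ • G) * X' = (A + ρ • G) * X + A * L * Z
        + (L * ((ρ * r) • Z) + ((A + ρ • G) * (Zᵀ + c • L)) * Lᵀ) := by
      simp only [hX', Matrix.mul_add, Matrix.add_mul, Matrix.mul_smul, Matrix.smul_mul,
        ← Matrix.mul_assoc, hGL]
      module
    rw [hFX', dotProduct_add_mul_add_mul_transpose_mulVec hxL]
    exact h.lyapunov x ⟨hxE, hxL⟩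
  obtain ⟨Z', hZ'⟩ := exists_forall_dotProduct_add_mul_mulVec_eq_zero E _ L hlyap
  refine ⟨X', Z', ?_, hc, fun x hx hx₀ => hGX' ▸ hc_mul x hx hx₀, hZ'⟩
  simp [IsSymm, hX', h.isSymm.eq, add_comm]

theorem add_transpose_eq_zero_of_forall_dotProduct_mulVec_eq_zero {R : Type*} [CommRing R]
    {M : Matrix ι ι R} (hM : ∀ x : ι → R, x ⬝ᵥ M *ᵥ x = 0) : M + Mᵀ = 0 := by
  classical
  have halt : (toBilin' M).IsAlt := fun x => (toBilin'_apply' M x x).trans (hM x)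
  ext i j
  have hij := halt.neg_eq (Pi.single i 1) (Pi.single j 1)
  rw [toBilin'_single, toBilin'_single] at hij
  rw [Matrix.add_apply, transpose_apply, ← hij, add_neg_cancel, Matrix.zero_apply]

variable {A G : Matrix ι ι ℝ} {ρ : ℝ} {B : Matrix ι κ ℝ} {X : Matrix ι ι ℝ}
  {Y : Matrix κ ι ℝ}

theorem IsSolutionOn.posDef (h : IsSolutionOn A G ρ ⊤ B X Y) : X.PosDef :=
  .of_dotProduct_mulVec_pos (isHermitian_iff_isSymm.2 h.isSymm) fun x hx => h.pos x trivial hx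

theorem IsSolutionOn.lyapunov_eq_zero (h : IsSolutionOn A G ρ ⊤ B X Y) :
    A * X + X * Aᵀ + B * Y + Yᵀ * Bᵀ + ρ • (G * X + X * Gᵀ) = 0 := by
  rw [← add_transpose_eq_zero_of_forall_dotProduct_mulVec_eq_zero fun x => h.lyapunov x trivial]
  simp only [transpose_add, transpose_mul, transpose_smul, h.isSymm.eq, Matrix.add_mul,
    Matrix.smul_mul]
  module

theorem IsSolutionOn.posDef_mul_add_mul_transpose (h : IsSolutionOn A G ρ ⊤ B X Y) :
    (G * X + X * Gᵀ).PosDef := by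
  have hXG : X * Gᵀ = (G * X)ᵀ := by rw [transpose_mul, h.isSymm.eq]
  rw [hXG]
  refine .of_dotProduct_mulVec_pos (isHermitian_iff_isSymm.2 (isSymm_add_transpose_self _))
    fun x hx => ?_
  rw [star_trivial, add_mulVec, dotProduct_add, dotProduct_transpose_mulVec]
  exact add_pos (h.pos_mul x trivial hx) (h.pos_mul x trivial hx)

end Descent

section Controllability

variable {n m : ℕ} {A G : Matrix (Fin n) (Fin n) ℝ} {B : Matrix (Fin n) (Fin m) ℝ}

theorem ker_vecMulLinear_ctrbM_succ (k : ℕ) :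
    LinearMap.ker (ctrbM A B (k + 1)).vecMulLinear
      = LinearMap.ker (ctrbM A B k).vecMulLinear ⊓ LinearMap.ker (A ^ k * B).vecMulLinear := by
  ext x
  have hcol (l : ℕ) (p : Fin l × Fin m) :
      (x ᵥ* ctrbM A B l) p = (x ᵥ* (A ^ (p.1 : ℕ) * B)) p.2 := rfl
  simp [funext_iff, hcol, Fin.forall_fin_succ', -vecMul_vecMul]

theorem ker_vecMulLinear_eq_bot_of_rank_eq_card {K ι κ : Type*} [Field K] [Fintype ι] [Fintype κ]
    {M : Matrix ι κ K} (hM : M.rank = Fintype.card ι) : LinearMap.ker M.vecMulLinear = ⊥ := by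
  rw [LinearMap.ker_eq_bot, coe_vecMulLinear, vecMul_injective_iff,
    linearIndependent_iff_card_eq_finrank_span, Set.finrank, ← rank_eq_finrank_span_row, hM]

theorem exists_isSolutionOn_top {ρ : ℝ}
    (hG : ∀ i, ∃ r : ℝ, 0 < r ∧ G * (A ^ i * B) = r • (A ^ i * B)) (k : ℕ)
    (h : ∃ X Z, IsSolutionOn A G ρ (LinearMap.ker (ctrbM A B k).vecMulLinear) (A ^ k * B) X Z) :
    ∃ X Z, IsSolutionOn A G ρ ⊤ B X Z := by
  induction k with
  | zero =>
    have hker : LinearMap.ker (ctrbM A B 0).vecMulLinear = ⊤ :=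
      LinearMap.ker_eq_top.2 (Subsingleton.elim _ _)
    simpa [hker] using h
  | succ k ih =>
    obtain ⟨X, Z, hXZ⟩ := h
    obtain ⟨r, hr, hGL⟩ := hG k
    rw [ker_vecMulLinear_ctrbM_succ, pow_succ', Matrix.mul_assoc] at hXZ
    exact ih (hXZ.exists_of_inf_ker hr hGL)

end Controllability

section Grading

theorem mul_pow_mul_eq_smul {R ι κ : Type*} [CommRing R] [Fintype ι] [DecidableEq ι]
    {A G : Matrix ι ι R} {B : Matrix ι κ R} {μ r : R} (hAG : A * G = (G + μ • 1) * A)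
    (hGB : G * B = r • B) (i : ℕ) : G * (A ^ i * B) = (r - i * μ) • (A ^ i * B) := by
  have hGA : G * A = A * G - μ • A := by
    rw [hAG, Matrix.add_mul, Matrix.smul_mul, Matrix.one_mul, add_sub_cancel_right]
  induction i with
  | zero => simpa using hGB
  | succ i ih =>
    rw [pow_succ', Matrix.mul_assoc A, ← Matrix.mul_assoc G, hGA, Matrix.sub_mul,
      Matrix.mul_assoc A, ih, Matrix.mul_smul, Matrix.smul_mul]
    push_cast
    module

theorem AntiHurwitz.pos_of_mul_eq_smul {n : ℕ} {κ : Type*} {G : Matrix (Fin n) (Fin n) ℝ}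
    (hG : AntiHurwitz G) {L : Matrix (Fin n) κ ℝ} (hL : L ≠ 0) {r : ℝ} (hGL : G * L = r • L) :
    0 < r := by
  refine hG r fun hunit => hL ?_
  obtain ⟨V, hV⟩ := hunit.exists_left_inv
  have hGLℂ : G.map Complex.ofReal * L.map Complex.ofReal = (r : ℂ) • L.map Complex.ofReal := by
    have hmul := Matrix.map_mul (L := G) (M := L) (f := Complex.ofRealHom)
    rw [hGL] at hmul
    refine hmul.symm.trans ?_
    ext i j
    simp
  have hLℂ : L.map Complex.ofReal = 0 := by
    rw [← Matrix.one_mul (L.map Complex.ofReal), ← hV, Matrix.mul_assoc, Matrix.sub_mul, hGLℂ,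
      Algebra.algebraMap_eq_smul_one, Matrix.smul_mul, Matrix.one_mul, sub_self, Matrix.mul_zero]
  exact map_injective Complex.ofReal_injective (by simpa using hLℂ)

theorem AntiHurwitz.exists_pos_mul_eq_smul {n : ℕ} {κ : Type*} {G : Matrix (Fin n) (Fin n) ℝ}
    (hG : AntiHurwitz G) {L : Matrix (Fin n) κ ℝ} {r : ℝ} (hGL : G * L = r • L) :
    ∃ s : ℝ, 0 < s ∧ G * L = s • L := by
  by_cases hL : L = 0
  · exact ⟨1, one_pos, by simp [hL]⟩
  · exact ⟨r, hG.pos_of_mul_eq_smul hL hGL, hGL⟩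

end Grading

theorem design_LMI_solvable_general {n m : ℕ} (A₀ : Matrix (Fin n) (Fin n) ℝ)
    (B : Matrix (Fin n) (Fin m) ℝ) (hctrb : (ctrbM A₀ B n).rank = n) (μ : ℝ)
    (Gd : Matrix (Fin n) (Fin n) ℝ) (hGdAH : AntiHurwitz Gd)
    (hA₀G : A₀ * Gd = (Gd + μ • 1) * A₀) (hGB : Gd * B = B) (ρ : ℝ) :
    ∃ (X : Matrix (Fin n) (Fin n) ℝ) (Y : Matrix (Fin m) (Fin n) ℝ),
      X.PosDef ∧
      A₀ * X + X * A₀ᵀ + B * Y + Yᵀ * Bᵀ + ρ • (Gd * X + X * Gdᵀ) = 0 ∧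
      (Gd * X + X * Gdᵀ).PosDef := by
  have hgraded (i : ℕ) : ∃ r : ℝ, 0 < r ∧ Gd * (A₀ ^ i * B) = r • (A₀ ^ i * B) :=
    hGdAH.exists_pos_mul_eq_smul
      (mul_pow_mul_eq_smul hA₀G (hGB.trans (one_smul ℝ B).symm) i)
  have hker : LinearMap.ker (ctrbM A₀ B n).vecMulLinear = ⊥ :=
    ker_vecMulLinear_eq_bot_of_rank_eq_card (hctrb.trans (Fintype.card_fin n).symm)
  obtain ⟨X, Y, hXY⟩ := exists_isSolutionOn_top hgraded n
    ⟨0, 0, hker ▸ isSolutionOn_bot A₀ Gd ρ (A₀ ^ n * B)⟩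
  exact ⟨X, Y, hXY.posDef, hXY.lyapunov_eq_zero, hXY.posDef_mul_add_mul_transpose⟩

/-- Solvability of the linear algebraic system (LMI) for any ρ > 0. -/
theorem design_LMI_solvable
    {n m : ℕ}
    (A₀ : Matrix (Fin n) (Fin n) ℝ) (B : Matrix (Fin n) (Fin m) ℝ)
    (hctrb : (ctrbM A₀ B n).rank = n)
    (ntilde : ℕ) (hntilde : (ctrbM A₀ B ntilde).rank = n) (hntildemin : ∀ k < ntilde, (ctrbM A₀ B k).rank ≠ n)
    (μ : ℝ) (hμ : μ ∈ Set.Icc (-1 : ℝ) (1 / (ntilde : ℝ)))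
    (Gd : Matrix (Fin n) (Fin n) ℝ) (hGdAH : AntiHurwitz Gd)
    (hA₀G : A₀ * Gd = (Gd + μ • 1) * A₀) (hGB : Gd * B = B) :
    ∀ ρ : ℝ, 0 < ρ →
      ∃ (X : Matrix (Fin n) (Fin n) ℝ) (Y : Matrix (Fin m) (Fin n) ℝ),
        X.PosDef ∧
        A₀ * X + X * A₀ᵀ + B * Y + Yᵀ * Bᵀ + ρ • (Gd * X + X * Gdᵀ) = 0 ∧
        (Gd * X + X * Gdᵀ).PosDef :=
  fun ρ _ => design_LMI_solvable_general A₀ B hctrb μ Gd hGdAH hA₀G hGB ρ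
end
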